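/- There exists a constant C < ∞ such that for every α ∈ ℝ and every ε > 0, the three-dimensional Lebesgue measure of the set {p ∈ [0,1)³ : |e(p) − α| ≤ ε} is at most C·ε. -/

import Mathlib

open MeasureTheory Real

/-- The lattice dispersion relation `e(k) = 3 - cos(2πk₁) - cos(2πk₂) - cos(2πk₃)`. -/
noncomputable def disp (k : Fin 3 → ℝ) : ℝ := 3 - ∑ i, Real.cos (2 * Real.pi * k i)

/-- The fundamental domain `[0,1)³` of the torus. -/
def box3 : Set (Fin 3 → ℝ) := Set.univ.pi fun _ => Set.Ico (0 : ℝ) 1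

lemma cos_gap_aux {a b m : ℝ} (ha : 0 ≤ a) (hab : a ≤ b) (hb : b ≤ π)
    (hma : m ≤ sin a) (hmb : m ≤ sin b) (hm : 0 < m) :
    2 * m / π * (b - a) ≤ cos a - cos b := by
  have hpi := Real.pi_pos
  have h1 : 0 ≤ sin ((a + b) / 2) := sin_nonneg_of_nonneg_of_le_pi (by linarith) (by linarith)
  have h2 : sin a + sin b = 2 * sin ((a + b) / 2) * cos ((a - b) / 2) := by
    rw [Real.sin_add_sin]
  have h3 : m ≤ sin ((a + b) / 2) := by
    have := cos_le_one ((a - b) / 2)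
    nlinarith
  have h4 : 2 / π * ((b - a) / 2) ≤ sin ((b - a) / 2) :=
    Real.mul_le_sin (by linarith) (by linarith)
  have h5 : cos a - cos b = 2 * sin ((a + b) / 2) * sin ((b - a) / 2) := by
    rw [Real.cos_sub_cos, show (a - b) / 2 = -((b - a) / 2) by ring, sin_neg]; ring
  have h6 : 0 ≤ 2 / π * ((b - a) / 2) := by
    have : 0 ≤ b - a := by linarith
    positivity
  rw [h5]
  calc 2 * m / π * (b - a) = 2 * (m * (2 / π * ((b - a) / 2))) := by ring
    _ ≤ 2 * (sin ((a + b) / 2) * sin ((b - a) / 2)) := by gcongr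
    _ = _ := by ring

lemma half_slice {s ε m : ℝ} (hm : 0 < m) (A : Set ℝ)
    (hA : ∀ x ∈ A, 0 ≤ x ∧ x ≤ 1 / 2 ∧ |cos (2 * π * x) - s| ≤ ε ∧ m ≤ sin (2 * π * x)) :
    volume A ≤ ENNReal.ofReal (ε / (2 * m)) := by
  have hpi := Real.pi_pos
  refine (Real.volume_le_diam A).trans (Metric.ediam_le ?_)
  have key : ∀ x ∈ A, ∀ y ∈ A, x ≤ y → y - x ≤ ε / (2 * m) := by
    intro x hx y hy hxy
    obtain ⟨x0, x1, x2, x3⟩ := hA x hx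
    obtain ⟨y0, y1, y2, y3⟩ := hA y hy
    have := cos_gap_aux (a := 2 * π * x) (b := 2 * π * y) (by positivity) (by gcongr)
      (by nlinarith) x3 y3 hm
    have e : 2 * m / π * (2 * π * y - 2 * π * x) = 4 * m * (y - x) := by field_simp; ring
    rw [e] at this
    rw [abs_le] at x2 y2
    rw [le_div_iff₀ (by positivity)]
    linarith
  intro x hx y hy
  rw [edist_dist, Real.dist_eq]
  apply ENNReal.ofReal_le_ofReal
  rcases le_total x y with h | h
  · rw [abs_sub_comm, abs_of_nonneg (by linarith)]; exact key x hx y hy h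
  · rw [abs_of_nonneg (by linarith)]; exact key y hy x hx h

lemma full_slice {s ε m : ℝ} (hε : 0 < ε) (hm : 0 < m) :
    volume {x : ℝ | x ∈ Set.Ico (0 : ℝ) 1 ∧ |cos (2 * π * x) - s| ≤ ε ∧ m ≤ |sin (2 * π * x)|}
      ≤ ENNReal.ofReal (ε / m) := by
  have hpi := Real.pi_pos
  set A := {x : ℝ | x ∈ Set.Ico (0 : ℝ) 1 ∧ |cos (2 * π * x) - s| ≤ ε ∧ m ≤ |sin (2 * π * x)|}
  have h1 : volume (A ∩ Set.Iic (1 / 2)) ≤ ENNReal.ofReal (ε / (2 * m)) := by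
    apply half_slice (s := s) hm
    rintro x ⟨⟨⟨h0, h1⟩, h2, h3⟩, h4⟩
    simp only [Set.mem_Iic] at h4
    refine ⟨h0, h4, h2, ?_⟩
    rwa [abs_of_nonneg] at h3
    exact sin_nonneg_of_nonneg_of_le_pi (by positivity) (by nlinarith)
  have h2 : volume (A ∩ Set.Ioi (1 / 2)) ≤ ENNReal.ofReal (ε / (2 * m)) := by
    rw [← measure_preimage_add_right volume (1 / 2 : ℝ) (A ∩ Set.Ioi (1 / 2))]
    apply half_slice (s := -s) hm
    rintro x ⟨⟨⟨h0, h1⟩, h2, h3⟩, h4⟩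
    simp only [Set.mem_Ioi] at h4
    have e : 2 * π * (x + 1 / 2) = 2 * π * x + π := by ring
    rw [e, cos_add_pi] at h2
    rw [e, sin_add_pi, abs_neg] at h3
    refine ⟨by linarith, by linarith, ?_, ?_⟩
    · rw [← abs_neg]; convert h2 using 2; ring
    · rwa [abs_of_nonneg] at h3
      exact sin_nonneg_of_nonneg_of_le_pi (mul_nonneg (by positivity) (by linarith))
        (by nlinarith)
  calc volume A ≤ volume ((A ∩ Set.Iic (1 / 2)) ∪ (A ∩ Set.Ioi (1 / 2))) := by
        apply measure_mono
        intro x hx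
        rcases le_or_gt x (1 / 2) with h | h
        · exact Or.inl ⟨hx, h⟩
        · exact Or.inr ⟨hx, h⟩
    _ ≤ _ := measure_union_le _ _
    _ ≤ ENNReal.ofReal (ε / (2 * m)) + ENNReal.ofReal (ε / (2 * m)) := add_le_add h1 h2
    _ = ENNReal.ofReal (ε / m) := by
        rw [← ENNReal.ofReal_add (by positivity) (by positivity)]
        congr 1; field_simp; ring

/-- inverse square root of `|x|`, extended-valued. -/
noncomputable def invSqrt (x : ℝ) : ENNReal := (ENNReal.ofReal (√|x|))⁻¹

lemma invSqrt_anti {x y : ℝ} (h : |x| ≤ |y|) : invSqrt y ≤ invSqrt x := by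
  unfold invSqrt
  gcongr

lemma measurable_invSqrt : Measurable invSqrt := by
  unfold invSqrt
  fun_prop

noncomputable def invSqrtLoc : ℝ → ENNReal := (Set.Icc (-1 : ℝ) 1).indicator invSqrt

lemma measurable_invSqrtLoc : Measurable invSqrtLoc :=
  measurable_invSqrt.indicator measurableSet_Icc

lemma lintegral_pos_part : ∫⁻ x in Set.Ioc (0 : ℝ) 1, invSqrt x < ⊤ := by
  have h := (intervalIntegral.intervalIntegrable_rpow' (a := 0) (b := 1) (r := -(1 / 2))
    (by norm_num)).1
  have h2 := h.lintegral_lt_top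
  refine lt_of_le_of_lt (le_of_eq ?_) h2
  refine setLIntegral_congr_fun measurableSet_Ioc ?_
  intro x hx
  have hx0 : 0 < x := hx.1
  simp only [invSqrt]
  rw [← ENNReal.ofReal_inv_of_pos (by positivity), abs_of_pos hx0, rpow_neg hx0.le,
    Real.sqrt_eq_rpow]

lemma lintegral_invSqrtLoc : ∫⁻ x, invSqrtLoc x < ⊤ := by
  have hpos : ∫⁻ x, (Set.Ioc (0 : ℝ) 1).indicator invSqrt x < ⊤ := by
    rw [lintegral_indicator measurableSet_Ioc]; exact lintegral_pos_part
  have hneg : ∫⁻ x, (Set.Ioc (0 : ℝ) 1).indicator invSqrt (-x) < ⊤ := by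
    rw [lintegral_neg_eq_self (fun x => (Set.Ioc (0 : ℝ) 1).indicator invSqrt x)]; exact hpos
  have hm : Measurable ((Set.Ioc (0 : ℝ) 1).indicator invSqrt) :=
    measurable_invSqrt.indicator measurableSet_Ioc
  have hae : ∀ᵐ x : ℝ, invSqrtLoc x ≤ (Set.Ioc (0 : ℝ) 1).indicator invSqrt x
      + (Set.Ioc (0 : ℝ) 1).indicator invSqrt (-x) := by
    have : ∀ᵐ x : ℝ, x ≠ 0 := by simp [ae_iff]
    filter_upwards [this] with x hx
    unfold invSqrtLoc
    by_cases h : x ∈ Set.Icc (-1 : ℝ) 1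
    · rw [Set.indicator_of_mem h]
      rcases lt_or_gt_of_ne hx with h0 | h0
      · rw [Set.indicator_of_mem (a := -x) (by constructor <;> linarith [h.1])]
        exact le_add_left (invSqrt_anti (by simp))
      · rw [Set.indicator_of_mem (a := x) (by constructor <;> linarith [h.2])]
        exact le_add_right le_rfl
    · rw [Set.indicator_of_notMem h]; exact zero_le
  refine lt_of_le_of_lt (lintegral_mono_ae hae) ?_
  rw [lintegral_add_left hm]
  exact ENNReal.add_lt_top.2 ⟨hpos, hneg⟩

/-- The one-dimensional weight. -/
noncomputable def wt : ℝ → ENNReal :=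
  (Set.Ico (0 : ℝ) 1).indicator fun t => invSqrt (sin (2 * π * t))

lemma measurable_wt : Measurable wt :=
  (measurable_invSqrt.comp (by fun_prop)).indicator measurableSet_Ico

lemma sin_lower {x : ℝ} (h0 : 0 ≤ x) (h1 : x ≤ 1 / 4) : x ≤ sin (2 * π * x) := by
  have hpi := Real.pi_pos
  have := Real.mul_le_sin (x := 2 * π * x) (by positivity) (by nlinarith)
  have e : 2 / π * (2 * π * x) = 4 * x := by field_simp; ring
  linarith

lemma sin_lower_abs {x : ℝ} (h1 : |x| ≤ 1 / 4) : |x| ≤ |sin (2 * π * x)| := by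
  rcases le_total 0 x with h | h
  · rw [abs_of_nonneg h] at *
    exact (sin_lower h h1).trans (le_abs_self _)
  · rw [abs_of_nonpos h] at *
    have := sin_lower (x := -x) (by linarith) h1
    rw [mul_neg, sin_neg] at this
    exact this.trans (neg_le_abs _)

lemma wt_le (t : ℝ) : wt t ≤ invSqrtLoc (t - 0) + invSqrtLoc (t - 1 / 2) + invSqrtLoc (t - 1) := by
  unfold wt
  by_cases h : t ∈ Set.Ico (0 : ℝ) 1
  swap
  · rw [Set.indicator_of_notMem h]; exact zero_le
  rw [Set.indicator_of_mem h]
  obtain ⟨h0, h1⟩ := h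
  have gen : ∀ c : ℝ, |t - c| ≤ 1 / 4 → |sin (2 * π * (t - c))| = |sin (2 * π * t)| →
      invSqrt (sin (2 * π * t)) ≤ invSqrtLoc (t - c) := by
    intro c hc hs
    unfold invSqrtLoc
    rw [Set.indicator_of_mem]
    · exact invSqrt_anti (by rw [← hs]; exact sin_lower_abs hc)
    · rw [abs_le] at hc; constructor <;> linarith [hc.1, hc.2]
  rcases le_total t (1 / 4) with h2 | h2
  · refine (gen 0 (by rw [abs_le]; constructor <;> linarith) (by simp)).trans ?_
    exact le_add_right (le_add_right le_rfl)
  rcases le_total t (3 / 4) with h3 | h3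
  · refine (gen (1 / 2) (by rw [abs_le]; constructor <;> linarith) ?_).trans ?_
    · rw [show 2 * π * (t - 1 / 2) = 2 * π * t - π by ring, sin_sub_pi, abs_neg]
    exact le_add_right (le_add_left le_rfl)
  · refine (gen 1 (by rw [abs_le]; constructor <;> linarith) ?_).trans ?_
    · rw [show 2 * π * (t - 1) = 2 * π * t - 2 * π by ring, sin_sub_two_pi]
    exact le_add_left le_rfl

lemma lintegral_wt : ∫⁻ t, wt t < ⊤ := by
  refine lt_of_le_of_lt (lintegral_mono wt_le) ?_
  have hm := measurable_invSqrtLoc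
  rw [lintegral_add_left (by fun_prop), lintegral_add_left (by fun_prop),
    lintegral_sub_right_eq_self (μ := volume) invSqrtLoc, lintegral_sub_right_eq_self (μ := volume) invSqrtLoc,
    lintegral_sub_right_eq_self (μ := volume) invSqrtLoc]
  have := lintegral_invSqrtLoc
  simp [ENNReal.add_lt_top, this]

lemma lintegral_wt2 : ∫⁻ y : Fin 2 → ℝ, wt (y 0) * wt (y 1) = (∫⁻ t, wt t) * ∫⁻ t, wt t := by
  rw [← lintegral_prod_mul measurable_wt.aemeasurable measurable_wt.aemeasurable]
  exact (volume_preserving_finTwoArrow ℝ).lintegral_comp_emb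
    (MeasurableEquiv.measurableEmbedding _) (fun z : ℝ × ℝ => wt z.1 * wt z.2)

/-- Part of the level set where `|sin|` is largest in coordinate `i`. -/
def part (α ε : ℝ) (i : Fin 3) : Set (Fin 3 → ℝ) :=
  {p | p ∈ box3 ∧ |disp p - α| ≤ ε ∧ ∀ j, |sin (2 * π * p j)| ≤ |sin (2 * π * p i)|}

lemma measurableSet_part (α ε : ℝ) (i : Fin 3) : MeasurableSet (part α ε i) := by
  have hb : MeasurableSet box3 := MeasurableSet.univ_pi fun _ => measurableSet_Ico
  refine hb.inter (MeasurableSet.inter ?_ ?_)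
  · change MeasurableSet {p : Fin 3 → ℝ | |disp p - α| ≤ ε}
    refine measurableSet_le ?_ measurable_const
    unfold disp; fun_prop
  · have : {p : Fin 3 → ℝ | ∀ j, |sin (2 * π * p j)| ≤ |sin (2 * π * p i)|}
      = ⋂ j, {p : Fin 3 → ℝ | |sin (2 * π * p j)| ≤ |sin (2 * π * p i)|} := by ext; simp
    change MeasurableSet {p : Fin 3 → ℝ | ∀ j, |sin (2 * π * p j)| ≤ |sin (2 * π * p i)|}
    rw [this]
    exact MeasurableSet.iInter fun j => measurableSet_le (by fun_prop) (by fun_prop)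

lemma slice_le {α ε : ℝ} (hε : 0 < ε) (i : Fin 3) (y : Fin 2 → ℝ) :
    volume {x : ℝ | i.insertNth (α := fun _ => ℝ) x y ∈ part α ε i} ≤
      ENNReal.ofReal ε * (wt (y 0) * wt (y 1)) := by
  by_cases hy : ∀ j, y j ∈ Set.Ico (0 : ℝ) 1
  swap
  · have : {x : ℝ | i.insertNth (α := fun _ => ℝ) x y ∈ part α ε i} = ∅ := by
      ext x
      simp only [Set.mem_ofPred_eq, Set.mem_empty_iff_false, iff_false]
      rintro ⟨hb, -⟩
      apply hy
      intro j
      have := hb (i.succAbove j) (Set.mem_univ _)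
      simpa using this
    rw [this]; simp
  have hw : ∀ j, wt (y j) = invSqrt (sin (2 * π * y j)) := fun j => by
    unfold wt; rw [Set.indicator_of_mem (hy j)]
  rw [hw, hw]
  set a := sin (2 * π * y 0) with ha
  set b := sin (2 * π * y 1) with hb
  have hne : ∀ z, invSqrt z ≠ 0 := fun z => by simp [invSqrt]
  have hε' : ENNReal.ofReal ε ≠ 0 := by simpa using hε
  by_cases ha0 : a = 0
  · have : invSqrt a = ⊤ := by simp [invSqrt, ha0]
    rw [this, ENNReal.top_mul (hne b), ENNReal.mul_top hε']
    exact le_top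
  by_cases hb0 : b = 0
  · have : invSqrt b = ⊤ := by simp [invSqrt, hb0]
    rw [this, ENNReal.mul_top (hne a), ENNReal.mul_top hε']
    exact le_top
  have ha1 : 0 < √|a| := by positivity
  have hb1 : 0 < √|b| := by positivity
  have e : ENNReal.ofReal ε * (invSqrt a * invSqrt b) = ENNReal.ofReal (ε / (√|a| * √|b|)) := by
    unfold invSqrt
    rw [← ENNReal.ofReal_inv_of_pos ha1, ← ENNReal.ofReal_inv_of_pos hb1,
      ← ENNReal.ofReal_mul (by positivity), ← ENNReal.ofReal_mul (by positivity)]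
    congr 1; field_simp
  rw [e]
  refine le_trans (measure_mono ?_)
    (full_slice (s := 3 - α - ∑ j, cos (2 * π * y j)) hε (mul_pos ha1 hb1))
  rintro x ⟨h1, h2, h3⟩
  refine ⟨by simpa using h1 i (Set.mem_univ _), ?_, ?_⟩
  · unfold disp at h2
    rw [Fin.sum_univ_succAbove _ i] at h2
    simp only [Fin.insertNth_apply_same, Fin.insertNth_apply_succAbove] at h2
    rw [← abs_neg]; convert h2 using 2; ring
  · have h4 := h3 (i.succAbove 0)
    have h5 := h3 (i.succAbove 1)
    simp only [Fin.insertNth_apply_same, Fin.insertNth_apply_succAbove] at h4 h5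
    calc √|a| * √|b| ≤ √|sin (2 * π * x)| * √|sin (2 * π * x)| := by gcongr
      _ = _ := Real.mul_self_sqrt (abs_nonneg _)

lemma part_le {α ε : ℝ} (hε : 0 < ε) (i : Fin 3) :
    volume (part α ε i) ≤ ENNReal.ofReal ε * ((∫⁻ t, wt t) * ∫⁻ t, wt t) := by
  have hmp := (volume_preserving_piFinSuccAbove (fun _ : Fin 3 => ℝ) i).symm
  rw [← hmp.measure_preimage_equiv, Measure.volume_eq_prod, Measure.prod_apply_symm
    ((MeasurableEquiv.measurable _) (measurableSet_part α ε i)), ← lintegral_wt2,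
    ← lintegral_const_mul _ (by have := measurable_wt; fun_prop)]
  exact lintegral_mono fun y => slice_le hε i y

theorem level_set_measure_3d :
    ∃ C : ℝ, ∀ α : ℝ, ∀ ε : ℝ, 0 < ε →
      volume {p ∈ box3 | |disp p - α| ≤ ε} ≤ ENNReal.ofReal (C * ε) := by
  set K := (∫⁻ t, wt t) * ∫⁻ t, wt t with hK
  have hKt : K ≠ ⊤ := ENNReal.mul_ne_top lintegral_wt.ne lintegral_wt.ne
  refine ⟨3 * K.toReal, fun α ε hε => ?_⟩
  calc volume {p ∈ box3 | |disp p - α| ≤ ε} ≤ volume (⋃ i, part α ε i) := by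
        apply measure_mono
        rintro p ⟨h1, h2⟩
        obtain ⟨i, hi⟩ := Finite.exists_max fun i => |sin (2 * π * p i)|
        exact Set.mem_iUnion.2 ⟨i, h1, h2, hi⟩
    _ ≤ ∑ i, volume (part α ε i) := measure_iUnion_fintype_le _ _
    _ ≤ ∑ _i : Fin 3, ENNReal.ofReal ε * K := Finset.sum_le_sum fun i _ => part_le hε i
    _ = ENNReal.ofReal (3 * K.toReal * ε) := by
        rw [ENNReal.ofReal_mul (by positivity), ENNReal.ofReal_mul (by positivity),
          ENNReal.ofReal_toReal hKt]
        simp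
        ring
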